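/- Let n ≥ 3 and let 𝒜 = {[A₁],…,[A_r]} be a malnormal subgroup system of F_n, with L, Γ_i, 𝒞, F_n − 𝒜 and Cyl(𝒞) as in the context. Then every compact open subset C of ∂²(F_n,𝒜) is a finite disjoint union of cylinders from Cyl(𝒞): there exist k ≥ 0, elements g₁,…,g_k ∈ F_n and w₁,…,w_k ∈ F_n − 𝒜 such that the sets g_i·C(γ_{w_i}) (1 ≤ i ≤ k) are pairwise disjoint and C = ⋃_{i=1}^k g_i·C(γ_{w_i}). -/

import Mathlib

/-!
The trace of a pair `{ξ, η}` at radius `R` is the unordered pair of points `u`, `v` where the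
rays `ξ`, `η` cross the sphere of radius `R` about `1` in the Cayley tree. If `u ≠ v`, the set of
all pairs with this trace is exactly the translated cylinder `u · C(γ_{u⁻¹v})`. For a fixed `R`
these sets are open and pairwise disjoint, and as `R` grows they form neighbourhood bases. So it
suffices to find one radius `R` such that, for every point of `C`, the class of equal trace is
contained in `C` and the label `u⁻¹v` lies in `F_n − 𝒜`. Both conditions persist when `R` grows and
depend only on the trace, so compactness of `C` reduces the search for `R` to a single point of `C`.

For a single point, openness of `C` handles the first condition. The second says that a geodesic
whose ends are not both in the limit set of one conjugate `B` of some `A_i` contains a subpath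
labelled by an element of `𝒞`. Indeed, if it contains none, each of its subpaths of length `L + 2`
lies in some tree `T_B`; consecutive subpaths overlap in length `L + 1`, which exceeds the diameter
bound for two distinct trees, so the whole geodesic lies in a single `T_B`. Every vertex of `T_B`
lies on the axis of some `a ∈ B`, and one of the two directions along the axis continues the
geodesic from `1` to that vertex without backtracking; hence the vertex is a prefix of some power
of `a`, and both ends of the geodesic belong to `∂B`.
-/

open scoped Classical
open MeasureTheory

noncomputable section

namespace RelCurr

/-- The alphabet `𝔄 = ℬ ∪ ℬ⁻¹`: a letter is a generator together with a sign. -/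
abbrev Letter (n : ℕ) := Fin n × Bool

/-- The inverse of a letter. -/
def linv {n : ℕ} (x : Letter n) : Letter n := (x.1, !x.2)

/-- The free group of rank `n` on the basis `Fin n`. -/
abbrev F (n : ℕ) := FreeGroup (Fin n)

/-- The reduced word of an element of `F n`. -/
def rword {n : ℕ} (g : F n) : List (Letter n) := FreeGroup.toWord g

/-- The length `|g|` of the reduced word of `g`. -/
def wlen {n : ℕ} (g : F n) : ℕ := (rword g).length

/-- The single-letter element of `F n` given by a letter. -/
def letterE {n : ℕ} (b : Letter n) : F n := FreeGroup.mk [b]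

/-- The conjugate subgroup `g A g⁻¹`. -/
def conjSub {n : ℕ} (g : F n) (A : Subgroup (F n)) : Subgroup (F n) :=
  Subgroup.map (MulAut.conj g).toMonoidHom A

/-- A subgroup `A` is malnormal if `xAx⁻¹ ∩ A = {1}` for every `x ∉ A`. -/
def Malnormal {n : ℕ} (A : Subgroup (F n)) : Prop :=
  ∀ x : F n, x ∉ A → conjSub x A ⊓ A = ⊥

/-- The word metric on the Cayley tree `T`. -/
def dist' {n : ℕ} (x y : F n) : ℕ := wlen (x⁻¹ * y)

/-- The cyclically reduced length of `a`. -/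
def cycLen {n : ℕ} (a : F n) : ℕ := sInf { m | ∃ h : F n, wlen (h⁻¹ * a * h) = m }

/-- The vertex set of the minimal `A`-invariant subtree `T_A` of the Cayley tree:
the union of the axes of the nontrivial elements of `A`. -/
def treeVerts {n : ℕ} (A : Subgroup (F n)) : Set (F n) :=
  { h | ∃ a ∈ A, a ≠ 1 ∧ wlen (h⁻¹ * a * h) = cycLen a }

/-- `γ_w ⊆ S`: every prefix of the reduced word of `w` lies in the vertex set `S`. -/
def pathIn {n : ℕ} (w : F n) (S : Set (F n)) : Prop :=
  ∀ m ≤ wlen w, FreeGroup.mk ((rword w).take m) ∈ S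

/-- An element is cyclically reduced if the last letter of its reduced word is not the
inverse of the first letter. -/
def CyclicallyReduced {n : ℕ} (w : F n) : Prop :=
  ∀ x y : Letter n, (rword w).head? = some x → (rword w).getLast? = some y → y ≠ linv x

/-- `v` is a length-one extension of `w`. -/
def LengthOneExt {n : ℕ} (w v : F n) : Prop :=
  ∃ b : Letter n, v = w * letterE b ∧ wlen v = wlen w + 1

/-- `a` is an extension of `w`: the reduced word of `w` is a proper prefix of that of `a`. -/
def ExtensionOf {n : ℕ} (w a : F n) : Prop :=
  rword w <+: rword a ∧ wlen w < wlen a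

/-- `g` is a proper power. -/
def IsProperPower {n : ℕ} (g : F n) : Prop := ∃ (h : F n) (k : ℕ), 2 ≤ k ∧ g = h ^ k

section System

variable {n r : ℕ} (A : Fin r → Subgroup (F n))

/-- `[B] ∈ 𝒜`, i.e. `B` is a conjugate of one of the subgroups of the system. -/
def InSystem (B : Subgroup (F n)) : Prop := ∃ (i : Fin r) (g : F n), B = conjSub g (A i)

/-- The family `A` represents a subgroup system: finite rank subgroups distinct
from `{1}` and `F n`. -/
def IsSystem : Prop := (∀ i, (A i).FG) ∧ (∀ i, A i ≠ ⊥) ∧ (∀ i, A i ≠ ⊤)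

/-- The subgroup system is malnormal. -/
def SystemMalnormal : Prop :=
  (∀ i, Malnormal (A i)) ∧
  ∀ B₁ B₂ : Subgroup (F n), InSystem A B₁ → InSystem A B₂ → B₁ ≠ B₂ → B₁ ⊓ B₂ = ⊥

/-- `g` is `𝒜`-peripheral: trivial or contained in a conjugate of one of the `A i`. -/
def Peripheral (g : F n) : Prop := g = 1 ∨ ∃ B, InSystem A B ∧ g ∈ B

/-- The diameter of the intersection of the trees of two distinct subgroups of the
system is at most `L`. -/
def DiamBound (L : ℕ) : Prop :=
  ∀ B₁ B₂ : Subgroup (F n), InSystem A B₁ → InSystem A B₂ → B₁ ≠ B₂ →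
    ∀ x ∈ treeVerts B₁ ∩ treeVerts B₂, ∀ y ∈ treeVerts B₁ ∩ treeVerts B₂, dist' x y ≤ L

/-- `B ∈ Γ_i`: `B` is a conjugate of `A i` whose tree contains the base point `1`. -/
def GammaMem (i : Fin r) (B : Subgroup (F n)) : Prop :=
  (∃ g : F n, B = conjSub g (A i)) ∧ (1 : F n) ∈ treeVerts B

/-- The finite set `𝒞` of words of length `L+2` whose path is contained in no tree
`T_B` with `B ∈ Γ_i`, for every `i`. -/
def Ccal (L : ℕ) : Set (F n) :=
  { w | wlen w = L + 2 ∧ ∀ (i : Fin r) (B : Subgroup (F n)), GammaMem A i B →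
      ¬ pathIn w (treeVerts B) }

/-- `F_n − 𝒜`: the words containing an element of `𝒞` as a contiguous subword. -/
def FmA (L : ℕ) : Set (F n) := { w | ∃ x ∈ Ccal A L, rword x <:+: rword w }

/-- `S_k`: words of length `k` not containing any element of `𝒞` as a subword. -/
def Sk (L k : ℕ) : Set (F n) := { w | wlen w = k ∧ w ∉ FmA A L }

end System

/-! ### The boundary of `F n` -/

/-- An infinite reduced word. -/
def IsRed {n : ℕ} (ξ : ℕ → Letter n) : Prop := ∀ i, ξ (i + 1) ≠ linv (ξ i)

/-- The Gromov boundary `∂F_n`, realized as the space of infinite reduced words,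
topologized as a subspace of the product space. -/
def Boundary (n : ℕ) : Type := { ξ : ℕ → Letter n // IsRed ξ }

instance {n : ℕ} : TopologicalSpace (Boundary n) :=
  instTopologicalSpaceSubtype

/-- The length-`m` prefix of a boundary point. -/
def bpre {n : ℕ} (ξ : Boundary n) (m : ℕ) : List (Letter n) :=
  (List.range m).map ξ.1

/-- The reduced word of `w` is a prefix of the infinite word `ξ`. -/
def wordPrefixOf {n : ℕ} (w : F n) (ξ : Boundary n) : Prop :=
  bpre ξ (wlen w) = rword w

/-- The boundary (limit set) `∂A ⊆ ∂F_n` of a subgroup `A`. -/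
def limitSet {n : ℕ} (A : Subgroup (F n)) : Set (Boundary n) :=
  { ξ | ∀ m : ℕ, ∃ a ∈ A, bpre ξ m <+: rword a }

/-- `ξ = g^{+∞}`: `ξ` is the limit of the reduced words of the powers of `g`. -/
def IsPosLimit {n : ℕ} (g : F n) (ξ : Boundary n) : Prop :=
  ∀ m : ℕ, ∃ N : ℕ, ∀ k ≥ N, bpre ξ m <+: rword (g ^ k)

/-- The number of letters cancelled when concatenating the word `l` with the
infinite reduced word `ξ`. -/
def cancelLen {n : ℕ} (l : List (Letter n)) (ξ : ℕ → Letter n) : ℕ :=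
  sSup { j | j ≤ l.length ∧ ∀ i < j, l.reverse[i]? = some (linv (ξ i)) }

/-- The sequence underlying the action of `g` on a boundary point: left multiplication
followed by cancellation. -/
def actSeq {n : ℕ} (g : F n) (ξ : ℕ → Letter n) : ℕ → Letter n :=
  fun m =>
    if h : m < (rword g).length - cancelLen (rword g) ξ then
      (rword g).get ⟨m, by omega⟩
    else ξ (m - ((rword g).length - cancelLen (rword g) ξ) + cancelLen (rword g) ξ)

/-- The action of `F n` on its boundary: left multiplication followed by cancellation.
(The sequence `actSeq g ξ.1` is always reduced, so the first branch always applies.) -/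
def bAct {n : ℕ} (g : F n) (ξ : Boundary n) : Boundary n :=
  if h : IsRed (actSeq g ξ.1) then ⟨actSeq g ξ.1, h⟩ else ξ

/-! ### The double boundary -/

/-- The diagonal action of `F n` on `Sym2 (∂F_n)`, whose restriction to the set of
non-diagonal classes is the action on the double boundary `∂²F_n`. -/
def dbAct {n : ℕ} (g : F n) : Sym2 (Boundary n) → Sym2 (Boundary n) := Sym2.map (bAct g)

/-- `∂²𝒜`: the classes `{ξ,η}` with both endpoints in `g·∂A_i = ∂(gA_ig⁻¹)` for some
`i` and `g`. -/
def dblBndA {n r : ℕ} (A : Fin r → Subgroup (F n)) : Set (Sym2 (Boundary n)) :=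
  { z | ∃ (i : Fin r) (g : F n) (ξ η : Boundary n), z = s(ξ, η) ∧
      ξ ∈ limitSet (conjSub g (A i)) ∧ η ∈ limitSet (conjSub g (A i)) }

/-- The double boundary `∂²(F_n,𝒜)` of `F n` relative to `𝒜`, as a subset of
`Sym2 (∂F_n)`: non-diagonal classes not lying in `∂²𝒜`. -/
def relSet {n r : ℕ} (A : Fin r → Subgroup (F n)) : Set (Sym2 (Boundary n)) :=
  { z | ¬ z.IsDiag } \ dblBndA A

/-- The cylinder set `C(γ_w) ⊆ ∂²F_n` of the geodesic path from `1` to `w`. -/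
def cylinder {n : ℕ} (w : F n) : Set (Sym2 (Boundary n)) :=
  { z | ∃ ξ η : Boundary n, z = s(ξ, η) ∧ ξ.1 0 ≠ η.1 0 ∧
      (wordPrefixOf w ξ ∨ wordPrefixOf w η) }

instance {n : ℕ} : MeasurableSpace (Sym2 (Boundary n)) := borel _

/-- The action of `g ∈ F n` on `∂²(F_n,𝒜)`. (The action of `F n` preserves
`∂²(F_n,𝒜)`, so the first branch always applies.) -/
def relAct {n r : ℕ} (A : Fin r → Subgroup (F n)) (g : F n) (z : ↥(relSet A)) :
    ↥(relSet A) :=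
  if h : dbAct g z.1 ∈ relSet A then ⟨dbAct g z.1, h⟩ else z

/-- The cylinder `C(γ_w)` as a subset of `∂²(F_n,𝒜)`. -/
def relCyl {n r : ℕ} (A : Fin r → Subgroup (F n)) (w : F n) : Set ↥(relSet A) :=
  Subtype.val ⁻¹' cylinder w

/-- The translated cylinder `g·C(γ_w)` as a subset of `∂²(F_n,𝒜)`. -/
def relCylG {n r : ℕ} (A : Fin r → Subgroup (F n)) (g w : F n) : Set ↥(relSet A) :=
  Subtype.val ⁻¹' (dbAct g '' cylinder w)

/-- A relative current on `(F_n,𝒜)`: an `F_n`-invariant Radon measure on the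
locally compact space `∂²(F_n,𝒜)` (finite on compacts, outer regular, inner regular
on open sets). -/
def IsRelCurrent {n r : ℕ} (A : Fin r → Subgroup (F n)) (μ : Measure ↥(relSet A)) : Prop :=
  (∀ (g : F n) (s : Set ↥(relSet A)), MeasurableSet s → μ (relAct A g ⁻¹' s) = μ s) ∧
  μ.Regular

/-- The `F_n`-orbit of a point of `Sym2 (∂F_n)`, inside `∂²(F_n,𝒜)`. -/
def orbitOf {n r : ℕ} (A : Fin r → Subgroup (F n)) (z : Sym2 (Boundary n)) :
    Set ↥(relSet A) :=
  { y | ∃ h : F n, (y : Sym2 (Boundary n)) = dbAct h z }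

/-! ### Refining families of locally constant maps -/

lemma exists_preimage_image_eq_of_isCompact {X Y ι : Type*} [TopologicalSpace X] [Preorder ι]
    [IsDirectedOrder ι] [Nonempty ι] {f : ι → X → Y} (hf : ∀ i, IsLocallyConstant (f i))
    (hfine : ∀ ⦃i j x y⦄, i ≤ j → f j x = f j y → f i x = f i y)
    {G : Set Y} (hG : ∀ ⦃i j x⦄, i ≤ j → f i x ∈ G → f j x ∈ G) {C : Set X} (hC : IsCompact C)
    (hfiber : ∀ x ∈ C, ∃ i, f i x ∈ G ∧ f i ⁻¹' {f i x} ⊆ C) :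
    ∃ i, f i '' C ⊆ G ∧ (f i '' C).Finite ∧ f i ⁻¹' (f i '' C) = C := by
  set U : ι → Set X := fun i => {x | f i x ∈ G ∧ f i ⁻¹' {f i x} ⊆ C}
  have hUopen (i : ι) : IsOpen (U i) := hf i {y | y ∈ G ∧ f i ⁻¹' {y} ⊆ C}
  have hUmono : Monotone U := fun i j hij x hx =>
    ⟨hG hij hx.1, fun y hy => hx.2 (hfine hij hy)⟩
  obtain ⟨i, hi⟩ := hC.elim_directed_cover U hUopen
    (fun x hx => Set.mem_iUnion.2 (hfiber x hx)) hUmono.directed_le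
  refine ⟨i, Set.image_subset_iff.2 fun x hx => (hi hx).1, ?_, ?_⟩
  · have := isCompact_iff_compactSpace.1 hC
    rw [Set.image_eq_range]
    exact ((hf i).comp_continuous continuous_subtype_val).range_finite
  · refine subset_antisymm ?_ (Set.subset_preimage_image _ _)
    rintro x ⟨y, hy, hxy⟩
    exact (hi hy).2 hxy.symm

/-! ### Words in free groups -/

section Words

open FreeGroup

variable {α : Type*} {l l₁ l₂ p s t : List (α × Bool)}

lemma fst_eq_imp_snd_eq_iff (a b : α × Bool) : (a.1 = b.1 → a.2 = b.2) ↔ b ≠ (a.1, !a.2) := by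
  obtain ⟨a, i⟩ := a
  obtain ⟨b, j⟩ := b
  cases i <;> cases j <;> simp [eq_comm]

lemma isReduced_append_iff : IsReduced (l₁ ++ l₂) ↔
    IsReduced l₁ ∧ IsReduced l₂ ∧ ∀ a ∈ l₁.getLast?, ∀ b ∈ l₂.head?, b ≠ (a.1, !a.2) := by
  simp only [FreeGroup.IsReduced, List.isChain_append, fst_eq_imp_snd_eq_iff]

lemma getLast?_invRev (l : List (α × Bool)) :
    (invRev l).getLast? = l.head?.map fun a => (a.1, !a.2) := by
  simp [invRev]

lemma head?_invRev (l : List (α × Bool)) :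
    (invRev l).head? = l.getLast?.map fun a => (a.1, !a.2) := by
  simp [invRev]

lemma exists_eq_append_cons_of_not_prefix {β : Type*} {l₁ l₂ : List β} (h₁ : ¬ l₁ <+: l₂)
    (h₂ : ¬ l₂ <+: l₁) :
    ∃ p a s b t, a ≠ b ∧ l₁ = p ++ a :: s ∧ l₂ = p ++ b :: t := by
  induction l₁ generalizing l₂ with
  | nil => exact absurd List.nil_prefix h₁
  | cons a s ih =>
    obtain _ | ⟨b, t⟩ := l₂
    · exact absurd List.nil_prefix h₂
    by_cases hab : a = b
    · subst hab
      rw [List.cons_prefix_cons, not_and] at h₁ h₂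
      obtain ⟨p, a', s', b', t', hne, rfl, rfl⟩ := ih (h₁ rfl) (h₂ rfl)
      exact ⟨a :: p, a', s', b', t', hne, rfl, rfl⟩
    · exact ⟨[], a, s, b, t, hab, rfl, rfl⟩

lemma mk_concat_mul_mk_cons_inv (l w : List (α × Bool)) (x : α × Bool) :
    mk (l ++ [x]) * mk ((x.1, !x.2) :: w) = mk l * mk w := by
  rw [mul_mk, mul_mk, List.append_assoc]
  exact Quot.sound Red.Step.not

lemma isReduced_invRev (h : IsReduced l) : IsReduced (invRev l) := by
  rw [isReduced_iff_reduce_eq, reduce_invRev, h.reduce_eq]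

lemma isReduced_append_or_append_invRev {c : List (α × Bool)} (hl : IsReduced l)
    (hc : IsCyclicallyReduced c) : IsReduced (l ++ c) ∨ IsReduced (l ++ invRev c) := by
  by_contra! h
  simp only [isReduced_append_iff, hl, hc.isReduced, isReduced_invRev hc.isReduced, true_and,
    head?_invRev, Option.mem_def, Option.map_eq_some_iff] at h
  push Not at h
  obtain ⟨⟨x, hx, y, hy, hyx⟩, x', hx', _, ⟨z, hz, rfl⟩, hzx⟩ := h
  obtain rfl : x' = x := Option.some_injective _ (hx'.symm.trans hx)
  obtain rfl : z = x' := by simpa [Prod.ext_iff] using hzx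
  exact (fst_eq_imp_snd_eq_iff z y).1 (hc.2 z hz y hy) hyx

variable [DecidableEq α]

lemma toWord_mk_of_isReduced (h : IsReduced l) : (mk l).toWord = l := by
  rw [toWord_mk, h.reduce_eq]

lemma prefix_toWord_mk_mul (h : IsReduced (l ++ t)) (v : FreeGroup α)
    (hv : v.toWord.length ≤ t.length) : l <+: (mk (l ++ t) * v).toWord := by
  rw [← mk_toWord (x := v)]
  generalize v.toWord = w at hv
  induction w generalizing t with
  | nil =>
    rw [← one_eq_mk, mul_one, toWord_mk_of_isReduced h]
    exact List.prefix_append l t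
  | cons y w ih =>
    by_cases hy : IsReduced (l ++ t ++ [y])
    · have hmul : (mk (l ++ t) * mk (y :: w) : FreeGroup α) = mk (l ++ (t ++ [y])) * mk w := by
        simp [mul_mk]
      rw [hmul]
      exact ih (by rwa [← List.append_assoc]) (by
        simp only [List.length_cons, List.length_append, List.length_nil] at hv ⊢
        omega)
    · obtain ⟨t, x, rfl⟩ := (List.eq_nil_or_concat' t).resolve_left (by rintro rfl; simp at hv)
      obtain rfl : y = (x.1, !x.2) := by
        by_contra hyx
        exact hy (isReduced_append_iff.2 ⟨h, by simp, by simpa using hyx⟩)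
      rw [← List.append_assoc, mk_concat_mul_mk_cons_inv]
      exact ih (h.infix ⟨[], [x], by simp⟩) (by simpa using hv)

lemma isCyclicallyReduced_toWord_of_forall_norm_le {c : FreeGroup α}
    (h : ∀ k : FreeGroup α, c.norm ≤ (k⁻¹ * c * k).norm) : IsCyclicallyReduced c.toWord := by
  set k := reduceCyclically.conjugator c.toWord
  set m := reduceCyclically c.toWord
  have hdec : k ++ m ++ invRev k = c.toWord :=
    reduceCyclically.conj_conjugator_reduceCyclically c.toWord
  have hconj : (mk k)⁻¹ * c * mk k = mk m := by
    rw [← mk_toWord (x := c), ← hdec, ← mul_mk, ← mul_mk, ← inv_mk]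
    group
  have hlen : c.toWord.length ≤ m.length := (h (mk k)).trans (hconj ▸ norm_mk_le)
  have hk : k = [] := by
    rw [← hdec] at hlen
    simp only [List.length_append, invRev_length] at hlen
    exact List.length_eq_zero_iff.1 (by omega)
  rw [← hdec, hk]
  simpa using reduceCyclically.isCyclicallyReduced isReduced_toWord

lemma prefix_toWord_conj_pow {h c : FreeGroup α} (hc : c ≠ 1) (hcyc : IsCyclicallyReduced c.toWord)
    (hhc : IsReduced (h.toWord ++ c.toWord)) :
    h.toWord <+: (h * c ^ (h.norm + 1) * h⁻¹).toWord := by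
  set N := h.norm + 1
  have hpow : h * c ^ N = mk (h.toWord ++ (List.replicate N c.toWord).flatten) := by
    rw [← mul_mk, ← pow_mk, mk_toWord, mk_toWord]
  rw [hpow]
  refine prefix_toWord_mk_mul ?_ _ ?_
  · simpa using IsReduced.append_flatten_replicate_append (L₃ := []) hcyc (by simpa using hhc)
      h.norm.succ_ne_zero
  · have hpos : 0 < c.toWord.length := List.length_pos_iff.2 (mt toWord_eq_nil_iff.1 hc)
    calc h⁻¹.toWord.length = h.norm := norm_inv_eq
      _ ≤ N * c.toWord.length := h.norm.le_succ.trans (Nat.le_mul_of_pos_right N hpos)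
      _ = _ := by simp

lemma toWord_inv_mul_of_eq_append {u v : FreeGroup α} (hu : u.toWord = p ++ s)
    (hv : v.toWord = p ++ t) (hst : ∀ a ∈ s.head?, ∀ b ∈ t.head?, a ≠ b) :
    (u⁻¹ * v).toWord = invRev s ++ t := by
  have hred : IsReduced (invRev s ++ t) := by
    refine isReduced_append_iff.2 ⟨isReduced_invRev ?_, ?_, ?_⟩
    · exact (hu ▸ isReduced_toWord).infix ⟨p, [], by simp⟩
    · exact (hv ▸ isReduced_toWord).infix ⟨p, [], by simp⟩
    · simp only [getLast?_invRev, Option.mem_def, Option.map_eq_some_iff]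
      rintro _ ⟨a, ha, rfl⟩ b hb
      simpa using (hst a ha b hb).symm
  rw [← toWord_mk_of_isReduced hred, ← mk_toWord (x := u), ← mk_toWord (x := v), hu, hv,
    ← mul_mk, ← mul_mk, ← mul_mk, ← inv_mk]
  group

lemma toWord_mul_of_norm_mul {u v : FreeGroup α} (h : (u * v).norm = u.norm + v.norm) :
    (u * v).toWord = u.toWord ++ v.toWord :=
  (toWord_mul_sublist u v).eq_of_length (h.trans List.length_append.symm)

end Words

/-! ### Minimal subtrees -/

section MinimalSubtree

open FreeGroup

variable {n r : ℕ} {A : Fin r → Subgroup (F n)} {B : Subgroup (F n)}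

lemma isCyclicallyReduced_of_wlen_eq_cycLen {a h : F n} (ha : wlen (h⁻¹ * a * h) = cycLen a) :
    IsCyclicallyReduced (rword (h⁻¹ * a * h)) :=
  isCyclicallyReduced_toWord_of_forall_norm_le fun k =>
    ha.trans_le (Nat.sInf_le ⟨h * k, congrArg wlen (by group)⟩)

lemma wlen_inv (g : F n) : wlen g⁻¹ = wlen g := norm_inv_eq

lemma cycLen_inv (a : F n) : cycLen a⁻¹ = cycLen a := by
  have (h : F n) : wlen (h⁻¹ * a⁻¹ * h) = wlen (h⁻¹ * a * h) := by
    rw [← wlen_inv (h⁻¹ * a * h)]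
    group
  simp only [cycLen, this]

lemma exists_rword_prefix_of_isReduced_append {a h : F n} (haB : a ∈ B) (ha1 : a ≠ 1)
    (hax : wlen (h⁻¹ * a * h) = cycLen a)
    (hred : FreeGroup.IsReduced (rword h ++ rword (h⁻¹ * a * h))) :
    ∃ b ∈ B, rword h <+: rword b := by
  have hc1 : h⁻¹ * a * h ≠ 1 := fun hc => ha1 (by simpa [mul_eq_one_iff_eq_inv] using hc)
  have hpow : a ^ (h.norm + 1) = h * (h⁻¹ * a * h) ^ (h.norm + 1) * h⁻¹ := by
    rw [← conj_pow]
    group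
  refine ⟨a ^ (h.norm + 1), B.pow_mem haB _, ?_⟩
  rw [hpow]
  exact prefix_toWord_conj_pow hc1 (isCyclicallyReduced_of_wlen_eq_cycLen hax) hred

/-- Of the two directions along the axis through `h`, one continues the path from `1` to `h`
without backtracking. -/
lemma exists_rword_prefix_of_mem_treeVerts {h : F n} (hh : h ∈ treeVerts B) :
    ∃ b ∈ B, rword h <+: rword b := by
  obtain ⟨a, haB, ha1, hax⟩ := hh
  have hinv : h⁻¹ * a⁻¹ * h = (h⁻¹ * a * h)⁻¹ := by group
  obtain hred | hred := isReduced_append_or_append_invRev (isReduced_toWord (x := h))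
    (isCyclicallyReduced_of_wlen_eq_cycLen hax)
  · exact exists_rword_prefix_of_isReduced_append haB ha1 hax hred
  · refine exists_rword_prefix_of_isReduced_append (B.inv_mem haB) (inv_ne_one.2 ha1) ?_ ?_
    · rw [hinv, wlen_inv, hax, cycLen_inv]
    · rwa [hinv, rword, rword, toWord_inv]

lemma conjSub_conjSub (g h : F n) (B : Subgroup (F n)) :
    conjSub g (conjSub h B) = conjSub (g * h) B := by
  rw [conjSub, conjSub, conjSub, Subgroup.map_map, _root_.map_mul]
  rfl

lemma InSystem.conj (hB : InSystem A B) (g : F n) : InSystem A (conjSub g B) := by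
  obtain ⟨i, h, rfl⟩ := hB
  exact ⟨i, g * h, conjSub_conjSub g h _⟩

lemma cycLen_conj (g a : F n) : cycLen (g * a * g⁻¹) = cycLen a := by
  unfold cycLen
  congr 1
  ext m
  exact (Equiv.mulLeft g⁻¹).exists_congr fun h => by simp [mul_assoc]

lemma mul_mem_treeVerts {h : F n} (hh : h ∈ treeVerts B) (g : F n) :
    g * h ∈ treeVerts (conjSub g B) := by
  obtain ⟨a, ha, ha1, hl⟩ := hh
  refine ⟨g * a * g⁻¹, ⟨a, ha, rfl⟩, by simpa using ha1, ?_⟩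
  rw [cycLen_conj, ← hl]
  group

end MinimalSubtree

/-! ### Bi-infinite geodesics -/

section Geodesic

variable {n r L : ℕ} {A : Fin r → Subgroup (F n)} {γ : ℤ → F n}

lemma dist'_comm (x y : F n) : dist' x y = dist' y x := by
  rw [dist', dist', ← wlen_inv, mul_inv_rev, inv_inv]

lemma rword_inv_mul_of_dist'_add {x y z : F n} (h : dist' x z = dist' x y + dist' y z) :
    rword (x⁻¹ * z) = rword (x⁻¹ * y) ++ rword (y⁻¹ * z) := by
  have hxyz : x⁻¹ * z = x⁻¹ * y * (y⁻¹ * z) := by group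
  rw [dist', hxyz] at h
  rw [hxyz]
  exact toWord_mul_of_norm_mul h

lemma mem_FmA_of_infix {u v : F n} (hu : u ∈ FmA A L) (huv : rword u <:+: rword v) :
    v ∈ FmA A L := by
  obtain ⟨x, hx, hxu⟩ := hu
  exact ⟨x, hx, hxu.trans huv⟩

lemma one_notMem_FmA : (1 : F n) ∉ FmA A L := by
  rintro ⟨x, ⟨hx, -⟩, hinf⟩
  have := hinf.length_le
  simp_all [wlen, rword]

/-- A bi-infinite geodesic of the Cayley tree, parametrized by its vertices. -/
def IsGeodesic (γ : ℤ → F n) : Prop :=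
  ∀ ⦃i j⦄, i ≤ j → (dist' (γ i) (γ j) : ℤ) = j - i

lemma IsGeodesic.rword_inv_mul (hγ : IsGeodesic γ) {i j k : ℤ} (hij : i ≤ j) (hjk : j ≤ k) :
    rword ((γ i)⁻¹ * γ k) = rword ((γ i)⁻¹ * γ j) ++ rword ((γ j)⁻¹ * γ k) := by
  apply rword_inv_mul_of_dist'_add
  zify
  rw [hγ hij, hγ hjk, hγ (hij.trans hjk)]
  ring

lemma IsGeodesic.rword_infix (hγ : IsGeodesic γ) {i j k l : ℤ} (hij : i ≤ j) (hjk : j ≤ k)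
    (hkl : k ≤ l) : rword ((γ j)⁻¹ * γ k) <:+: rword ((γ i)⁻¹ * γ l) := by
  rw [hγ.rword_inv_mul hij (hjk.trans hkl), hγ.rword_inv_mul hjk hkl, ← List.append_assoc]
  exact List.infix_append _ _ _

lemma IsGeodesic.exists_window_subset_treeVerts (hγ : IsGeodesic γ) {i : ℤ}
    (hi : (γ i)⁻¹ * γ (i + (L + 2)) ∉ Ccal A L) :
    ∃ B, InSystem A B ∧ ∀ j, i ≤ j → j ≤ i + (L + 2) → γ j ∈ treeVerts B := by
  have hlen : wlen ((γ i)⁻¹ * γ (i + (L + 2))) = L + 2 := by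
    have : (wlen ((γ i)⁻¹ * γ (i + (L + 2))) : ℤ) = i + (L + 2) - i := hγ (by omega)
    omega
  obtain ⟨m, B, ⟨⟨g, rfl⟩, -⟩, hpath⟩ :
      ∃ m B, GammaMem A m B ∧ pathIn ((γ i)⁻¹ * γ (i + (L + 2))) (treeVerts B) := by
    by_contra! h
    exact hi ⟨hlen, h⟩
  refine ⟨conjSub (γ i) (conjSub g (A m)), InSystem.conj ⟨m, g, rfl⟩ _, fun j hij hj => ?_⟩
  have hprefix := hpath (wlen ((γ i)⁻¹ * γ j)) <| by
    have : (wlen ((γ i)⁻¹ * γ j) : ℤ) = j - i := hγ hij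
    omega
  rw [hγ.rword_inv_mul hij hj, wlen, List.take_left] at hprefix
  have hmem := mul_mem_treeVerts hprefix (γ i)
  rwa [rword, FreeGroup.mk_toWord, mul_inv_cancel_left] at hmem

/-- Consecutive windows overlap in length `L + 1`, which exceeds the diameter bound for two
distinct trees. -/
lemma IsGeodesic.exists_subset_treeVerts (hγ : IsGeodesic γ) (hdiam : DiamBound A L)
    (h : ∀ i, (γ i)⁻¹ * γ (i + (L + 2)) ∉ Ccal A L) :
    ∃ B, InSystem A B ∧ ∀ i, γ i ∈ treeVerts B := by
  choose B hB hmem using fun i => hγ.exists_window_subset_treeVerts (h i)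
  have hstep (i : ℤ) : B i = B (i + 1) := by
    by_contra hne
    have hle := hdiam _ _ (hB i) (hB (i + 1)) hne
      (γ (i + 1)) ⟨hmem i _ (by omega) (by omega), hmem (i + 1) _ (by omega) (by omega)⟩
      (γ (i + (L + 2))) ⟨hmem i _ (by omega) (by omega), hmem (i + 1) _ (by omega) (by omega)⟩
    have hdist := hγ (show i + 1 ≤ i + (L + 2) by omega)
    omega
  have hconst (i : ℤ) : B i = B 0 := by
    induction i with
    | zero => rfl
    | succ i ih => rw [← hstep, ih]
    | pred i ih => rw [hstep, sub_add_cancel, ih]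
  exact ⟨B 0, hB 0, fun i => hconst i ▸ hmem i i le_rfl (by omega)⟩

end Geodesic

/-! ### Rays and the geodesic between two boundary points -/

section Ray

open FreeGroup

variable {n r L : ℕ} {A : Fin r → Subgroup (F n)} {B : Subgroup (F n)} {ξ η : Boundary n}
  {R R' c : ℕ}

/-- The infinite reduced word `ξ` as a stream of letters. -/
def Boundary.toStream (ξ : Boundary n) : Stream' (Letter n) := ξ.1

lemma isRed_iff_isReduced_take {ω : Stream' (Letter n)} :
    IsRed ω.get ↔ ∀ k, FreeGroup.IsReduced (ω.take k) := by
  simp only [IsRed, FreeGroup.IsReduced, List.isChain_iff_getElem, fst_eq_imp_snd_eq_iff,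
    Stream'.take_get, Stream'.length_take]
  exact ⟨fun h k i _ => h i, fun h i => h (i + 2) i (by omega)⟩

lemma isReduced_take_toStream (ξ : Boundary n) (k : ℕ) :
    FreeGroup.IsReduced (ξ.toStream.take k) :=
  isRed_iff_isReduced_take.1 ξ.2 k

lemma bpre_eq_take (ξ : Boundary n) (R : ℕ) : bpre ξ R = ξ.toStream.take R :=
  List.ext_getElem (by simp [bpre]) fun i _ _ => by
    rw [Stream'.take_get]
    simp [bpre, Boundary.toStream, Stream'.get]

lemma bpre_add (ξ : Boundary n) (R k : ℕ) :
    bpre ξ (R + k) = bpre ξ R ++ (ξ.toStream.drop R).take k := by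
  rw [bpre_eq_take, bpre_eq_take, Stream'.take_add]

/-- The vertex at distance `R` from `1` on the geodesic ray from `1` to `ξ`. -/
def rayVertex (ξ : Boundary n) (R : ℕ) : F n := mk (bpre ξ R)

lemma rword_rayVertex (ξ : Boundary n) (R : ℕ) : rword (rayVertex ξ R) = bpre ξ R :=
  toWord_mk_of_isReduced (bpre_eq_take ξ R ▸ isReduced_take_toStream ξ R)

lemma rayVertex_eq_iff : rayVertex ξ R = rayVertex η R ↔ ∀ i < R, ξ.1 i = η.1 i := by
  rw [← toWord_inj]
  change rword _ = rword _ ↔ _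
  rw [rword_rayVertex, rword_rayVertex]
  simp [bpre]

lemma dist'_rayVertex_add (ξ : Boundary n) (R k : ℕ) :
    dist' (rayVertex ξ R) (rayVertex ξ (R + k)) = k := by
  rw [dist', wlen, rword, toWord_inv_mul_of_eq_append (s := [])
    ((rword_rayVertex ξ R).trans (List.append_nil _).symm)
    ((rword_rayVertex ξ _).trans (bpre_add ξ R k)) (by simp)]
  simp

lemma dist'_rayVertex_of_ne (heq : ∀ i < c, ξ.1 i = η.1 i) (hne : ξ.1 c ≠ η.1 c) (j k : ℕ) :
    dist' (rayVertex ξ (c + j)) (rayVertex η (c + k)) = j + k := by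
  have hp : bpre ξ c = bpre η c := by simpa [bpre] using heq
  have hhead (ζ : Boundary n) (k : ℕ) :
      ∀ a ∈ ((ζ.toStream.drop c).take k).head?, a = ζ.1 c := by
    cases k <;> simp [Stream'.take_succ, Boundary.toStream, Stream'.get, Stream'.drop, eq_comm]
  rw [dist', wlen, rword, toWord_inv_mul_of_eq_append
    ((rword_rayVertex ξ _).trans (bpre_add ξ c j))
    ((rword_rayVertex η _).trans (hp ▸ bpre_add η c k))]
  · simp [Stream'.length_take]
  · intro a ha b hb
    rwa [hhead ξ j a ha, hhead η k b hb]

lemma exists_isGeodesic_rayVertex (h : ξ ≠ η) :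
    ∃ (γ : ℤ → F n) (c : ℕ), IsGeodesic γ ∧ rayVertex ξ c = rayVertex η c ∧
      ∀ k : ℕ, γ (-k) = rayVertex ξ (c + k) ∧ γ k = rayVertex η (c + k) := by
  have hex : ∃ i, ξ.1 i ≠ η.1 i := by
    by_contra! hall
    exact h (Subtype.ext (funext hall))
  set c := Nat.find hex
  have heq (i : ℕ) (hi : i < c) : ξ.1 i = η.1 i := not_not.1 (Nat.find_min hex hi)
  have hbase : rayVertex ξ c = rayVertex η c := rayVertex_eq_iff.2 heq
  set γ : ℤ → F n := fun i =>
    if 0 ≤ i then rayVertex η (c + i.toNat) else rayVertex ξ (c + (-i).toNat)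
  have hpos (k : ℕ) : γ k = rayVertex η (c + k) := by simp [γ]
  have hneg (k : ℕ) : γ (-k) = rayVertex ξ (c + k) := by
    obtain rfl | hk := k.eq_zero_or_pos
    · simpa [γ] using hbase.symm
    · simp [γ, hk.ne']
  refine ⟨γ, c, fun i j hij => ?_, hbase, fun k => ⟨hneg k, hpos k⟩⟩
  obtain ⟨i, rfl | rfl⟩ := i.eq_nat_or_neg <;> obtain ⟨j, rfl | rfl⟩ := j.eq_nat_or_neg
  · obtain ⟨k, rfl⟩ := Nat.exists_eq_add_of_le (Int.ofNat_le.1 hij)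
    rw [hpos, hpos, ← add_assoc, dist'_rayVertex_add]
    omega
  · obtain ⟨rfl, rfl⟩ : i = 0 ∧ j = 0 := by omega
    simp [dist', wlen, rword]
  · rw [hneg, hpos, dist'_rayVertex_of_ne heq (Nat.find_spec hex)]
    omega
  · obtain ⟨k, rfl⟩ := Nat.exists_eq_add_of_le (show j ≤ i by omega)
    rw [hneg, hneg, ← add_assoc, dist'_comm, dist'_rayVertex_add]
    omega

lemma mem_limitSet_of_rayVertex_mem (h : ∀ k, rayVertex ξ (c + k) ∈ treeVerts B) :
    ξ ∈ limitSet B := by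
  intro m
  obtain ⟨b, hb, hprefix⟩ := exists_rword_prefix_of_mem_treeVerts (h m)
  rw [rword_rayVertex, bpre_eq_take] at hprefix
  refine ⟨b, hb, List.IsPrefix.trans ?_ hprefix⟩
  rw [bpre_eq_take]
  exact (Stream'.take_prefix _ _ _).2 (Nat.le_add_left m c)

lemma exists_rayVertex_inv_mul_mem_FmA (hdiam : DiamBound A L) (hne : ξ ≠ η)
    (hA : s(ξ, η) ∉ dblBndA A) : ∃ R, (rayVertex ξ R)⁻¹ * rayVertex η R ∈ FmA A L := by
  obtain ⟨γ, c, hγ, -, hray⟩ := exists_isGeodesic_rayVertex hne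
  by_contra! havoid
  have hwindow (i : ℤ) : (γ i)⁻¹ * γ (i + (L + 2)) ∉ Ccal A L := by
    intro hi
    obtain ⟨k, hk₁, hk₂⟩ : ∃ k : ℕ, -(k : ℤ) ≤ i ∧ i + (L + 2) ≤ k :=
      ⟨i.natAbs + L + 2, by omega, by omega⟩
    refine havoid (c + k) ?_
    rw [← (hray k).1, ← (hray k).2]
    exact ⟨_, hi, hγ.rword_infix hk₁ (by omega) hk₂⟩
  obtain ⟨_, ⟨i, g, rfl⟩, hB⟩ := hγ.exists_subset_treeVerts hdiam hwindow
  exact hA ⟨i, g, ξ, η, rfl,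
    mem_limitSet_of_rayVertex_mem fun k => (hray k).1 ▸ hB (-k),
    mem_limitSet_of_rayVertex_mem fun k => (hray k).2 ▸ hB k⟩

lemma rayVertex_inv_mul_mem_FmA_of_le (hR : (rayVertex ξ R)⁻¹ * rayVertex η R ∈ FmA A L)
    (hRR' : R ≤ R') : (rayVertex ξ R')⁻¹ * rayVertex η R' ∈ FmA A L := by
  have hRne : rayVertex ξ R ≠ rayVertex η R := by
    intro h
    rw [h, inv_mul_cancel] at hR
    exact one_notMem_FmA hR
  obtain ⟨γ, c, hγ, hc, hray⟩ := exists_isGeodesic_rayVertex (ne_of_apply_ne (rayVertex · R) hRne)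
  have hcR : c ≤ R := by
    by_contra! hlt
    exact hRne (rayVertex_eq_iff.2 fun i hi => rayVertex_eq_iff.1 hc i (hi.trans hlt))
  obtain ⟨k, rfl⟩ := Nat.exists_eq_add_of_le hcR
  obtain ⟨l, rfl⟩ := Nat.exists_eq_add_of_le hRR'
  rw [← (hray k).1, ← (hray k).2] at hR
  rw [add_assoc, ← (hray (k + l)).1, ← (hray (k + l)).2]
  exact mem_FmA_of_infix hR (hγ.rword_infix (by omega) (by omega) (by omega))

end Ray

/-! ### The boundary action and translated cylinders -/

section BoundaryAction

open FreeGroup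

open scoped Stream'

variable {n : ℕ} {ξ η : Boundary n} {ω : Stream' (Letter n)} {g u v : F n}
  {l p s t : List (Letter n)}

lemma isRed_toStream (ξ : Boundary n) : IsRed ξ.toStream.get := ξ.2

lemma exists_toStream_eq (h : IsRed ω.get) : ∃ ξ : Boundary n, ξ.toStream = ω := ⟨⟨ω.get, h⟩, rfl⟩

lemma Boundary.toStream_injective : Function.Injective (Boundary.toStream (n := n)) :=
  Subtype.val_injective

lemma isRed_append_iff : IsRed (l ++ₛ ω).get ↔
    FreeGroup.IsReduced l ∧ IsRed ω.get ∧ ∀ x ∈ l.getLast?, ω.get 0 ≠ linv x := by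
  have htake : IsRed (l ++ₛ ω).get ↔ ∀ k, FreeGroup.IsReduced (l ++ ω.take k) := by
    simp only [isRed_iff_isReduced_take, Stream'.append_take]
    refine ⟨fun h k => h _, fun h k => (h k).infix ?_⟩
    exact ((Stream'.take_prefix _ _ _).2 (Nat.le_add_left k l.length)).isInfix
  simp only [htake, isReduced_append_iff, forall_and, forall_const, ← isRed_iff_isReduced_take]
  refine and_congr_right fun _ => and_congr_right fun _ => ⟨fun h x hx => ?_, fun h k x hx => ?_⟩
  · exact h 1 x hx _ (by simp [Stream'.take_succ, Stream'.head])
  · cases k with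
    | zero => simp
    | succ k => simpa [Stream'.take_succ, Stream'.head, linv] using h x hx

lemma wordPrefixOf_iff : wordPrefixOf u ξ ↔ ∃ ω, ξ.toStream = rword u ++ₛ ω := by
  rw [wordPrefixOf, bpre_eq_take]
  constructor
  · intro h
    exact ⟨ξ.toStream.drop (wlen u), by rw [← h, Stream'.append_take_drop]⟩
  · rintro ⟨ω, h⟩
    rw [h, wlen, Stream'.take_append_of_le_length _ _ _ le_rfl, List.take_length]

lemma cancelLen_eq (hred : IsRed (p ++ₛ ω).get) :
    cancelLen (p ++ s) (invRev s ++ₛ ω).get = s.length := by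
  refine IsGreatest.csSup_eq ⟨⟨by simp, fun i hi => ?_⟩, fun j hj => ?_⟩
  · have hi' : i < (invRev s).length := by simpa
    rw [Stream'.get_append_left _ _ _ hi', List.reverse_append,
      List.getElem?_append_left (by simpa), List.getElem?_eq_getElem (by simpa)]
    simp [invRev, linv]
  · by_contra! hlt
    have hlast : p.getLast? = some (linv (ω.get 0)) := by
      have := hj.2 s.length hlt
      rw [← invRev_length (L₁ := s), Stream'.get_append_length] at this
      rwa [List.reverse_append, List.getElem?_append_right (by simp), List.length_reverse,
        invRev_length, Nat.sub_self, ← List.head?_eq_getElem?, List.head?_reverse] at this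
    exact (isRed_append_iff.1 hred).2.2 _ hlast (by simp [linv])

lemma toStream_bAct (hg : rword g = p ++ s) (hξ : ξ.toStream = invRev s ++ₛ ω)
    (hred : IsRed (p ++ₛ ω).get) : (bAct g ξ).toStream = p ++ₛ ω := by
  have hact : actSeq g ξ.1 = (p ++ₛ ω).get := by
    funext m
    change actSeq g ξ.toStream.get m = _
    have hlen : (p ++ s).length - s.length = p.length := by simp
    simp only [actSeq, hg, hξ, cancelLen_eq hred, hlen, List.get_eq_getElem]
    split_ifs with hm
    · rw [Stream'.get_append_left _ _ _ hm, List.getElem_append_left hm]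
    · obtain ⟨k, rfl⟩ := Nat.exists_eq_add_of_le (not_lt.1 hm)
      rw [Nat.add_sub_cancel_left, Nat.add_comm k, ← invRev_length (L₁ := s),
        Stream'.get_append_right, Stream'.get_append_right]
  have hval : bAct g ξ = ⟨actSeq g ξ.1, hact ▸ hred⟩ := dif_pos _
  rw [hval]
  exact hact

/-- The pairs `{ξ, η}` such that `u` is a prefix of `ξ` and `v` is a prefix of `η`. If neither of
`u`, `v` is a prefix of the other, these are the bi-infinite geodesics through `u` and `v`. -/
def geodesicsThrough (u v : F n) : Set (Sym2 (Boundary n)) :=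
  {z | ∃ ξ η, z = s(ξ, η) ∧ wordPrefixOf u ξ ∧ wordPrefixOf v η}

lemma isRed_append_append_iff (ht : t ≠ []) :
    IsRed (l ++ₛ (t ++ₛ ω)).get ↔ FreeGroup.IsReduced (l ++ t) ∧ IsRed (t ++ₛ ω).get := by
  rw [← Stream'.append_append_stream, isRed_append_iff, isRed_append_iff,
    List.getLast?_append_of_ne_nil _ ht]
  exact and_congr_right fun h => (and_iff_right (h.infix (List.suffix_append _ _).isInfix)).symm

lemma isRed_append_iff_get_zero_ne (hl : FreeGroup.IsReduced (p ++ s)) (hs : s ≠ [])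
    (hω : IsRed ω.get) (ω' : Stream' (Letter n)) :
    IsRed ((p ++ s) ++ₛ ω).get ↔ ω.get 0 ≠ (invRev s ++ₛ ω').get 0 := by
  obtain ⟨s, x, rfl⟩ := s.eq_nil_or_concat'.resolve_left hs
  simp only [isRed_append_iff, hl, hω, true_and]
  simp [invRev, linv]

lemma wordPrefixOf_bAct (hu : rword u = p ++ s) (hv : rword v = p ++ t)
    (huv : rword (u⁻¹ * v) = invRev s ++ t) (hs : s ≠ []) (ht : t ≠ []) (hne : ξ.1 0 ≠ η.1 0)
    (hη : wordPrefixOf (u⁻¹ * v) η) :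
    wordPrefixOf u (bAct u ξ) ∧ wordPrefixOf v (bAct u η) := by
  obtain ⟨ω, hω⟩ := wordPrefixOf_iff.1 hη
  rw [huv, Stream'.append_append_stream] at hω
  constructor
  · refine wordPrefixOf_iff.2 ⟨ξ.toStream, toStream_bAct (List.append_nil _).symm rfl ?_⟩
    rw [hu, isRed_append_iff_get_zero_ne (hu ▸ isReduced_toWord) hs (isRed_toStream ξ), ← hω]
    exact hne
  · refine wordPrefixOf_iff.2 ⟨ω, ?_⟩
    rw [hv, Stream'.append_append_stream]
    refine toStream_bAct hu hω ((isRed_append_append_iff ht).2 ⟨hv ▸ isReduced_toWord, ?_⟩)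
    exact ((isRed_append_append_iff ht).1 (hω ▸ isRed_toStream η)).2

lemma exists_bAct_eq (hu : rword u = p ++ s) (hv : rword v = p ++ t)
    (huv : rword (u⁻¹ * v) = invRev s ++ t) (hs : s ≠ []) (ht : t ≠ [])
    (hξ : wordPrefixOf u ξ) (hη : wordPrefixOf v η) :
    ∃ ξ' η', ξ'.1 0 ≠ η'.1 0 ∧ wordPrefixOf (u⁻¹ * v) η' ∧ bAct u ξ' = ξ ∧ bAct u η' = η := by
  obtain ⟨ω₁, hω₁⟩ := wordPrefixOf_iff.1 hξ
  obtain ⟨ω₂, hω₂⟩ := wordPrefixOf_iff.1 hη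
  rw [hv, Stream'.append_append_stream] at hω₂
  have hξred := hω₁ ▸ isRed_toStream ξ
  have hηred := hω₂ ▸ isRed_toStream η
  obtain ⟨ξ', rfl⟩ := exists_toStream_eq (isRed_append_iff.1 hξred).2.1
  obtain ⟨η', hη'⟩ := exists_toStream_eq <| (isRed_append_append_iff (l := invRev s) ht).2
    ⟨huv ▸ isReduced_toWord, ((isRed_append_append_iff ht).1 hηred).2⟩
  refine ⟨ξ', η', ?_, wordPrefixOf_iff.2 ⟨ω₂, ?_⟩, ?_, ?_⟩
  · rw [hu, isRed_append_iff_get_zero_ne (hu ▸ isReduced_toWord) hs (isRed_toStream ξ'),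
      ← hη'] at hξred
    exact hξred
  · rw [hη', huv, Stream'.append_append_stream]
  · exact Boundary.toStream_injective <|
      (toStream_bAct (List.append_nil _).symm rfl hξred).trans hω₁.symm
  · exact Boundary.toStream_injective <| (toStream_bAct hu hη' hηred).trans hω₂.symm

lemma dbAct_image_cylinder (huv : ¬ rword u <+: rword v) (hvu : ¬ rword v <+: rword u) :
    dbAct u '' cylinder (u⁻¹ * v) = geodesicsThrough u v := by
  obtain ⟨p, a, s, b, t, hab, hu, hv⟩ := exists_eq_append_cons_of_not_prefix huv hvu
  have hword : rword (u⁻¹ * v) = invRev (a :: s) ++ b :: t :=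
    toWord_inv_mul_of_eq_append hu hv (by simpa using hab)
  have hs := List.cons_ne_nil a s
  have ht := List.cons_ne_nil b t
  ext z
  constructor
  · rintro ⟨_, ⟨ξ, η, rfl, hne, hξ | hη⟩, rfl⟩
    · exact ⟨_, _, Sym2.eq_swap, wordPrefixOf_bAct hu hv hword hs ht hne.symm hξ⟩
    · exact ⟨_, _, rfl, wordPrefixOf_bAct hu hv hword hs ht hne hη⟩
  · rintro ⟨ξ, η, rfl, hξ, hη⟩
    obtain ⟨ξ', η', hne, hη', rfl, rfl⟩ := exists_bAct_eq hu hv hword hs ht hξ hη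
    exact ⟨_, ⟨ξ', η', rfl, hne, .inr hη'⟩, rfl⟩

end BoundaryAction

/-! ### Traces on spheres -/

section Trace

open Topology

variable {n r L : ℕ} {A : Fin r → Subgroup (F n)} {ξ : Boundary n} {u v w : F n} {R R' : ℕ}
  {z z' : Sym2 (Boundary n)}

lemma isLocallyConstant_rayVertex (R : ℕ) :
    IsLocallyConstant fun ξ : Boundary n => rayVertex ξ R := by
  refine (IsLocallyConstant.iff_eventually_eq _).2 fun ξ => ?_
  simp only [rayVertex_eq_iff, ← Finset.mem_range]
  refine (Finset.range R).eventually_all.2 fun i _ => ?_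
  have hcont : Continuous fun ξ : Boundary n => ξ.1 i :=
    (continuous_apply i).comp continuous_subtype_val
  exact (IsLocallyConstant.iff_continuous _).2 hcont |>.eventually_eq ξ

lemma exists_rayVertex_fiber_subset {U : Set (Boundary n)} (hU : U ∈ 𝓝 ξ) :
    ∃ R, ∀ η, rayVertex η R = rayVertex ξ R → η ∈ U := by
  obtain ⟨V, hV, hVU⟩ := (mem_nhds_induced _ _ _).1 hU
  obtain ⟨_, ⟨x, R, rfl⟩, hξ, hcyl⟩ :=
    (PiNat.isTopologicalBasis_cylinders fun _ : ℕ => Letter n).mem_nhds_iff.1 hV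
  rw [← PiNat.mem_cylinder_iff_eq.1 hξ] at hcyl
  exact ⟨R, fun η hη => hVU (hcyl (rayVertex_eq_iff.1 hη))⟩

lemma rayVertex_eq_of_le {η : Boundary n} (hRR' : R ≤ R') (h : rayVertex ξ R' = rayVertex η R') :
    rayVertex ξ R = rayVertex η R :=
  rayVertex_eq_iff.2 fun i hi => rayVertex_eq_iff.1 h i (hi.trans_le hRR')

lemma wlen_rayVertex (ξ : Boundary n) (R : ℕ) : wlen (rayVertex ξ R) = R := by
  simp [wlen, rword_rayVertex, bpre]

lemma wordPrefixOf_iff_rayVertex_eq : wordPrefixOf w ξ ↔ rayVertex ξ (wlen w) = w := by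
  rw [wordPrefixOf, ← rword_rayVertex]
  exact FreeGroup.toWord_inj

/-- The trace of a pair `{ξ, η}` at radius `R`: the unordered pair of points where the rays from
`1` to `ξ` and `η` cross the sphere of radius `R` about `1`. -/
def sphereTrace (R : ℕ) : Sym2 (Boundary n) → Sym2 (F n) := Sym2.map (rayVertex · R)

lemma isLocallyConstant_sphereTrace (R : ℕ) :
    IsLocallyConstant (sphereTrace (n := n) R) := by
  refine IsLocallyConstant.iff_isOpen_fiber.2 fun q => isOpen_coinduced.2 ?_
  have hpair : IsLocallyConstant fun p : Boundary n × Boundary n =>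
      (rayVertex p.1 R, rayVertex p.2 R) :=
    ((isLocallyConstant_rayVertex R).comp_continuous continuous_fst).prodMk
      ((isLocallyConstant_rayVertex R).comp_continuous continuous_snd)
  exact (hpair.comp Sym2.mk.uncurry).isOpen_fiber q

lemma sphereTrace_eq_of_le (hRR' : R ≤ R') (h : sphereTrace R' z = sphereTrace R' z') :
    sphereTrace R z = sphereTrace R z' := by
  induction z, z' using Sym2.inductionOn₂ with | _ ξ η ξ' η'
  simp only [sphereTrace, Sym2.map_mk, Sym2.eq_iff] at h ⊢
  exact h.imp (And.imp (rayVertex_eq_of_le hRR') (rayVertex_eq_of_le hRR'))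
    (And.imp (rayVertex_eq_of_le hRR') (rayVertex_eq_of_le hRR'))

lemma exists_sphereTrace_fiber_subset {V : Set (Sym2 (Boundary n))} (hV : IsOpen V) (hz : z ∈ V) :
    ∃ R, ∀ z', sphereTrace R z' = sphereTrace R z → z' ∈ V := by
  induction z using Sym2.ind with | _ ξ η
  obtain ⟨U₁, hU₁, U₂, hU₂, hU⟩ := mem_nhds_prod_iff.1 ((isOpen_coinduced.1 hV).mem_nhds hz)
  obtain ⟨R₁, hR₁⟩ := exists_rayVertex_fiber_subset hU₁
  obtain ⟨R₂, hR₂⟩ := exists_rayVertex_fiber_subset hU₂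
  have hmem {ξ' η' : Boundary n} (hξ : rayVertex ξ' (max R₁ R₂) = rayVertex ξ (max R₁ R₂))
      (hη : rayVertex η' (max R₁ R₂) = rayVertex η (max R₁ R₂)) : s(ξ', η') ∈ V :=
    hU ⟨hR₁ _ (rayVertex_eq_of_le (le_max_left _ _) hξ),
      hR₂ _ (rayVertex_eq_of_le (le_max_right _ _) hη)⟩
  refine ⟨max R₁ R₂, fun z' h => ?_⟩
  induction z' using Sym2.ind with | _ ξ' η'
  obtain ⟨hξ, hη⟩ | ⟨hξ, hη⟩ := Sym2.eq_iff.1 h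
  · exact hmem hξ hη
  · exact Sym2.eq_swap ▸ hmem hη hξ

lemma geodesicsThrough_eq_sphereTrace_fiber (hu : wlen u = R) (hv : wlen v = R) :
    geodesicsThrough u v = sphereTrace R ⁻¹' {s(u, v)} := by
  ext z
  simp only [geodesicsThrough, wordPrefixOf_iff_rayVertex_eq, hu, hv, Set.mem_ofPred_eq]
  constructor
  · rintro ⟨ξ, η, rfl, rfl, rfl⟩
    rfl
  · intro h
    induction z using Sym2.ind with | _ ξ η
    obtain ⟨hξ, hη⟩ | ⟨hξ, hη⟩ := Sym2.eq_iff.1 h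
    · exact ⟨ξ, η, rfl, hξ, hη⟩
    · exact ⟨η, ξ, Sym2.eq_swap, hη, hξ⟩

/-- The unordered pairs `{u, v}` such that the geodesic from `u` to `v`, read in one of its two
directions, is labelled by an element of `F_n − 𝒜`. -/
def crossing (A : Fin r → Subgroup (F n)) (L : ℕ) : Set (Sym2 (F n)) :=
  {q | ∃ u v, q = s(u, v) ∧ u⁻¹ * v ∈ FmA A L}

lemma exists_rayVertex_of_sphereTrace_mem_crossing (h : sphereTrace R z ∈ crossing A L) :
    ∃ ξ η, z = s(ξ, η) ∧ (rayVertex ξ R)⁻¹ * rayVertex η R ∈ FmA A L := by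
  obtain ⟨u, v, huv, hmem⟩ := h
  induction z using Sym2.ind with | _ ξ η
  obtain ⟨rfl, rfl⟩ | ⟨rfl, rfl⟩ := Sym2.eq_iff.1 huv
  · exact ⟨ξ, η, rfl, hmem⟩
  · exact ⟨η, ξ, Sym2.eq_swap, hmem⟩

lemma sphereTrace_mem_crossing_of_le (hRR' : R ≤ R') (h : sphereTrace R z ∈ crossing A L) :
    sphereTrace R' z ∈ crossing A L := by
  obtain ⟨ξ, η, rfl, hmem⟩ := exists_rayVertex_of_sphereTrace_mem_crossing h
  exact ⟨_, _, rfl, rayVertex_inv_mul_mem_FmA_of_le hmem hRR'⟩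

lemma exists_sphereTrace_mem_crossing (hdiam : DiamBound A L) (hz : z ∈ relSet A) :
    ∃ R, sphereTrace R z ∈ crossing A L := by
  induction z using Sym2.ind with | _ ξ η
  obtain ⟨R, hR⟩ := exists_rayVertex_inv_mul_mem_FmA hdiam (mt Sym2.mk_isDiag_iff.2 hz.1) hz.2
  exact ⟨R, _, _, rfl, hR⟩

lemma exists_relCylG_eq_sphereTrace_fiber (h : sphereTrace R z ∈ crossing A L) :
    ∃ g, ∃ w ∈ FmA A L,
      relCylG A g w = (fun y : relSet A => sphereTrace R y.1) ⁻¹' {sphereTrace R z} := by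
  obtain ⟨ξ, η, rfl, hmem⟩ := exists_rayVertex_of_sphereTrace_mem_crossing h
  have hlen : (rword (rayVertex ξ R)).length = (rword (rayVertex η R)).length :=
    (wlen_rayVertex ξ R).trans (wlen_rayVertex η R).symm
  have hne : rword (rayVertex ξ R) ≠ rword (rayVertex η R) := by
    intro heq
    rw [FreeGroup.toWord_injective heq, inv_mul_cancel] at hmem
    exact one_notMem_FmA hmem
  refine ⟨rayVertex ξ R, _, hmem, ?_⟩
  rw [relCylG, dbAct_image_cylinder (fun h => hne (h.eq_of_length hlen))
    (fun h => hne (h.eq_of_length hlen.symm).symm),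
    geodesicsThrough_eq_sphereTrace_fiber (wlen_rayVertex ξ R) (wlen_rayVertex η R)]
  rfl

lemma exists_sphereTrace_fiber_subset_of_isOpen (hdiam : DiamBound A L) {C : Set (relSet A)}
    (hC : IsOpen C) {z : relSet A} (hz : z ∈ C) :
    ∃ R, sphereTrace R z.1 ∈ crossing A L ∧
      (fun y : relSet A => sphereTrace R y.1) ⁻¹' {sphereTrace R z.1} ⊆ C := by
  obtain ⟨V, hV, rfl⟩ := isOpen_induced_iff.1 hC
  obtain ⟨R₁, hR₁⟩ := exists_sphereTrace_fiber_subset hV hz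
  obtain ⟨R₂, hR₂⟩ := exists_sphereTrace_mem_crossing hdiam z.2
  exact ⟨max R₁ R₂, sphereTrace_mem_crossing_of_le (le_max_right _ _) hR₂,
    fun y hy => hR₁ _ (sphereTrace_eq_of_le (le_max_left _ _) hy)⟩

end Trace

theorem statement_8_general (n r L : ℕ) (A : Fin r → Subgroup (F n)) (hdiam : DiamBound A L)
    (C : Set ↥(relSet A)) (hC : IsCompact C) (hCo : IsOpen C) :
    ∃ (k : ℕ) (g w : Fin k → F n),
      (∀ i, w i ∈ FmA A L) ∧
      (∀ i j, i ≠ j → relCylG A (g i) (w i) ∩ relCylG A (g j) (w j) = ∅) ∧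
      C = ⋃ i, relCylG A (g i) (w i) := by
  obtain ⟨R, hcross, hfinite, hsat⟩ := exists_preimage_image_eq_of_isCompact
    (f := fun R (z : relSet A) => sphereTrace R z.1)
    (fun R => (isLocallyConstant_sphereTrace R).comp_continuous continuous_subtype_val)
    (fun _ _ _ _ => sphereTrace_eq_of_le) (fun _ _ _ => sphereTrace_mem_crossing_of_le) hC
    (fun _ => exists_sphereTrace_fiber_subset_of_isOpen hdiam hCo)
  obtain ⟨k, q, hq, hrange⟩ := hfinite.fin_param
  have hcyl (i : Fin k) : ∃ g, ∃ w ∈ FmA A L,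
      relCylG A g w = (fun z : relSet A => sphereTrace R z.1) ⁻¹' {q i} := by
    obtain ⟨z, hz, hqi⟩ := hrange ▸ Set.mem_range_self i
    exact hqi ▸ exists_relCylG_eq_sphereTrace_fiber (hcross ⟨z, hz, rfl⟩)
  choose g w hw hcyl using hcyl
  refine ⟨k, g, w, hw, fun i j hij => ?_, ?_⟩
  · rw [hcyl, hcyl, ← Set.disjoint_iff_inter_eq_empty]
    exact (Set.disjoint_singleton.2 (hq.ne hij)).preimage _
  · simp_rw [hcyl, ← Set.preimage_iUnion, Set.iUnion_singleton_eq_range, hrange, hsat]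

/-- Every compact open subset of ∂²(F_n,𝒜) is a finite disjoint union of cylinders
from Cyl(𝒞). -/
theorem statement_8 (n r L : ℕ) (hn : 3 ≤ n) (A : Fin r → Subgroup (F n))
    (hsys : IsSystem A) (hmal : SystemMalnormal A) (hL : 1 ≤ L)
    (hdiam : DiamBound A L) (hbase : ∀ i, (1 : F n) ∈ treeVerts (A i))
    (C : Set ↥(relSet A)) (hC : IsCompact C) (hCo : IsOpen C) :
    ∃ (k : ℕ) (g w : Fin k → F n),
      (∀ i, w i ∈ FmA A L) ∧
      (∀ i j, i ≠ j → relCylG A (g i) (w i) ∩ relCylG A (g j) (w j) = ∅) ∧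
      C = ⋃ i, relCylG A (g i) (w i) :=
  statement_8_general n r L A hdiam C hC hCo

end RelCurr
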